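/- Let ρ ≥ 1 and let (X, D) be a ρ-metric space. Let P ⊆ X be a finite set with weight function w : P → (0,∞), let k ≥ 1 be an integer, and let p ↦ p' be a map from P into a finite set B ⊆ X such that Σ_{q∈P} w(q)·D(q, q') ≤ α·OPT_k(P, w), where α ≥ 0, and assume Σ_{q∈P} w(q)·D(q, q') > 0. For b ∈ B let P_b := {q ∈ P : q' = b}. Then for every p ∈ P with p ∈ P_b and every subset C ⊆ X with 1 ≤ |C| ≤ k such that Σ_{q∈P} w(q)·D(q, C) > 0, one has w(p)·D(p, C) / Σ_{q∈P} w(q)·D(q, C) ≤ ρ·α·w(p)·D(p, p') / Σ_{q∈P} w(q)·D(q, q') + ρ²·(α + 1)·w(p) / Σ_{q∈P_b} w(q). -/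

import Mathlib

open Finset

/-- Distance from a point to a finite set of centers: `D(x,C) = min_{c ∈ C} D(x,c)`. -/
noncomputable def distToSet {X : Type*} (D : X → X → ℝ) (x : X) (C : Finset X) : ℝ :=
  sInf ((fun c => D x c) '' C)

/-- `OPT_k(P, w)`: the minimum over all center sets `C ⊆ X` with `1 ≤ |C| ≤ k` of the
weighted clustering cost `∑_{p ∈ P} w p · D(p, C)`. -/
noncomputable def OPTk {X : Type*} (D : X → X → ℝ) (P : Finset X) (w : X → ℝ) (k : ℕ) : ℝ :=
  sInf { c : ℝ | ∃ C : Finset X, C.Nonempty ∧ C.card ≤ k ∧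
    c = ∑ p ∈ P, w p * distToSet D p C }

/-!
Average the triangle inequality `D(b, C) ≤ ρ (D(b, q) + D(q, C))` over the cluster `P_b`: writing
`A = ∑ w(q) D(q, q')`, `S = ∑ w(q) D(q, C)` and `W = ∑_{q ∈ P_b} w(q)`, this gives
`W D(b, C) ≤ ρ (A + S) ≤ ρ (α + 1) S`. Inserting it into `D(p, C) ≤ ρ (D(p, b) + D(b, C))` and
dividing by `S ≥ A / α` yields the two terms of the bound. The triangle inequality enters only as a
mutual control of the query costs `g(q) = D(q, C)` of a point and `h(b) = D(b, C)` of a center, so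
points and centers may live in different spaces `X` and `Y`.
-/

section DistToSet

variable {X : Type*} {D : X → X → ℝ} {C : Finset X}

theorem distToSet_le (D : X → X → ℝ) (x : X) {c : X} (hc : c ∈ C) : distToSet D x C ≤ D x c :=
  csInf_le (C.finite_toSet.image _).bddBelow ⟨c, hc, rfl⟩

theorem exists_distToSet_eq (D : X → X → ℝ) (x : X) (hC : C.Nonempty) :
    ∃ c ∈ C, D x c = distToSet D x C :=
  (hC.to_set.image _).csInf_mem (C.finite_toSet.image _)

theorem distToSet_nonneg {x : X} (hD : ∀ c ∈ C, 0 ≤ D x c) : 0 ≤ distToSet D x C :=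
  Real.sInf_nonneg (Set.forall_mem_image.2 hD)

theorem distToSet_le_mul_add {ρ : ℝ} {x y : X} (htri : ∀ c ∈ C, D x c ≤ ρ * (D x y + D y c))
    (hC : C.Nonempty) : distToSet D x C ≤ ρ * (D x y + distToSet D y C) := by
  obtain ⟨c, hc, hyc⟩ := exists_distToSet_eq D y hC
  rw [← hyc]
  exact (distToSet_le D x hc).trans (htri c hc)

theorem OPTk_le_sum {P : Finset X} {w : X → ℝ} {k : ℕ} (hD : ∀ x ∈ P, ∀ y, 0 ≤ D x y)
    (hw : ∀ p ∈ P, 0 ≤ w p) (hC : C.Nonempty) (hCk : C.card ≤ k) :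
    OPTk D P w k ≤ ∑ p ∈ P, w p * distToSet D p C := by
  refine csInf_le ⟨0, ?_⟩ ⟨C, hC, hCk, rfl⟩
  rintro _ ⟨C', -, -, rfl⟩
  exact sum_nonneg fun p hp => mul_nonneg (hw p hp) (distToSet_nonneg fun c _ => hD p hp c)

end DistToSet

section Sensitivity

variable {X Y : Type*} [DecidableEq Y] {D : X → Y → ℝ} {ρ : ℝ} {g : X → ℝ} {h : Y → ℝ}
  {P : Finset X} {w : X → ℝ} {π : X → Y} {α : ℝ}

theorem cluster_weight_pos (hw : ∀ q ∈ P, 0 < w q) {p : X} (hp : p ∈ P) :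
    0 < ∑ q ∈ P with π q = π p, w q :=
  sum_pos (fun q hq => hw q (mem_filter.1 hq).1) ⟨p, mem_filter.2 ⟨hp, rfl⟩⟩

theorem cluster_weight_mul_le (hρ : 0 ≤ ρ) (hD : ∀ x y, 0 ≤ D x y) (hg : ∀ x, 0 ≤ g x)
    (hhg : ∀ x y, h y ≤ ρ * (D x y + g x)) (hw : ∀ q ∈ P, 0 ≤ w q) (b : Y) :
    (∑ q ∈ P with π q = b, w q) * h b ≤
      ρ * (∑ q ∈ P, w q * D q (π q) + ∑ q ∈ P, w q * g q) :=
  calc (∑ q ∈ P with π q = b, w q) * h b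
      ≤ ∑ q ∈ P with π q = b, w q * (ρ * (D q (π q) + g q)) := by
        rw [sum_mul]
        refine sum_le_sum fun q hq => ?_
        obtain ⟨hqP, rfl⟩ := mem_filter.1 hq
        exact mul_le_mul_of_nonneg_left (hhg q (π q)) (hw q hqP)
    _ ≤ ∑ q ∈ P, w q * (ρ * (D q (π q) + g q)) :=
        sum_le_sum_of_subset_of_nonneg (filter_subset _ P) fun q hq _ =>
          mul_nonneg (hw q hq) (mul_nonneg hρ (add_nonneg (hD q (π q)) (hg q)))
    _ = ρ * (∑ q ∈ P, w q * D q (π q) + ∑ q ∈ P, w q * g q) := by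
        rw [← sum_add_distrib, mul_sum]
        exact sum_congr rfl fun q _ => by ring

theorem weighted_sensitivity_bound_general (hρ : 0 ≤ ρ) (hD : ∀ x y, 0 ≤ D x y)
    (hg : ∀ x, 0 ≤ g x) (hgh : ∀ x y, g x ≤ ρ * (D x y + h y))
    (hhg : ∀ x y, h y ≤ ρ * (D x y + g x)) (hw : ∀ q ∈ P, 0 ≤ w q)
    (hcost : ∑ q ∈ P, w q * D q (π q) ≤ α * ∑ q ∈ P, w q * g q)
    (hcost_pos : 0 < ∑ q ∈ P, w q * D q (π q)) {p : X} (hp : p ∈ P)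
    (hweight_pos : 0 < ∑ q ∈ P with π q = π p, w q) :
    w p * g p / (∑ q ∈ P, w q * g q) ≤
      ρ * α * (w p * D p (π p)) / (∑ q ∈ P, w q * D q (π q)) +
        ρ ^ 2 * (α + 1) * w p / (∑ q ∈ P with π q = π p, w q) := by
  have hcluster := cluster_weight_mul_le (π := π) hρ hD hg hhg hw (π p)
  have hS_nonneg : 0 ≤ ∑ q ∈ P, w q * g q := sum_nonneg fun q hq => mul_nonneg (hw q hq) (hg q)
  set A := ∑ q ∈ P, w q * D q (π q)
  set S := ∑ q ∈ P, w q * g q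
  set W := ∑ q ∈ P with π q = π p, w q
  have hS : 0 < S := hS_nonneg.lt_of_ne' fun hS0 =>
    (hcost_pos.trans_le hcost).ne' (by rw [hS0, mul_zero])
  have hwp := hw p hp
  have hDp := hD p (π p)
  have hinv : 1 / S ≤ α / A := by
    rwa [div_le_div_iff₀ hS hcost_pos, one_mul]
  have hcenter : h (π p) / S ≤ ρ * (α + 1) / W := by
    rw [div_le_div_iff₀ hS hweight_pos]
    calc h (π p) * W = W * h (π p) := mul_comm _ _
      _ ≤ ρ * (A + S) := hcluster
      _ ≤ ρ * (α * S + S) := by gcongr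
      _ = ρ * (α + 1) * S := by ring
  calc w p * g p / S
      ≤ w p * (ρ * (D p (π p) + h (π p))) / S := by gcongr; exact hgh p (π p)
    _ = ρ * (w p * D p (π p)) * (1 / S) + ρ * w p * (h (π p) / S) := by ring
    _ ≤ ρ * (w p * D p (π p)) * (α / A) + ρ * w p * (ρ * (α + 1) / W) := by gcongr
    _ = ρ * α * (w p * D p (π p)) / A + ρ ^ 2 * (α + 1) * w p / W := by ring

end Sensitivity

/-- Weighted sensitivity bound (Lemma `sensbound`): if `p ↦ p'` maps `P` into a finite set
`B` with weighted connection cost at most `α·OPT_k(P,w)`, then for every `p ∈ P` lying in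
cluster `P_b` (with `b = p'`) and every query `C` with `1 ≤ |C| ≤ k`,
`w(p)·D(p,C) / ∑_q w(q)·D(q,C) ≤ ρ·α·w(p)·D(p,p') / ∑_q w(q)·D(q,q')
  + ρ²·(α+1)·w(p) / ∑_{q ∈ P_b} w(q)`. -/
theorem weighted_sensitivity_bound {X : Type*} [DecidableEq X] (D : X → X → ℝ) (ρ : ℝ)
    (hρ1 : 1 ≤ ρ)
    (hsymm : ∀ x y, D x y = D y x) (hnonneg : ∀ x y, 0 ≤ D x y)
    (htri : ∀ x y z, D x z ≤ ρ * (D x y + D y z))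
    (P : Finset X) (w : X → ℝ) (hw : ∀ p ∈ P, 0 < w p)
    (k : ℕ) (hk : 1 ≤ k)
    (B : Finset X) (π : X → X) (α : ℝ) (hα : 0 ≤ α)
    (hπB : ∀ p ∈ P, π p ∈ B)
    (hπcost : ∑ q ∈ P, w q * D q (π q) ≤ α * OPTk D P w k)
    (hπpos : 0 < ∑ q ∈ P, w q * D q (π q)) :
    ∀ p ∈ P, ∀ b ∈ B, π p = b →
      ∀ C : Finset X, C.Nonempty → C.card ≤ k →
        0 < (∑ q ∈ P, w q * distToSet D q C) →
        w p * distToSet D p C / (∑ q ∈ P, w q * distToSet D q C) ≤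
          ρ * α * (w p * D p (π p)) / (∑ q ∈ P, w q * D q (π q)) +
            ρ ^ 2 * (α + 1) * w p / (∑ q ∈ P.filter fun q => π q = b, w q) := by
  rintro p hp b - rfl C hC hCk -
  have hw' : ∀ q ∈ P, 0 ≤ w q := fun q hq => (hw q hq).le
  have hcost : ∑ q ∈ P, w q * D q (π q) ≤ α * ∑ q ∈ P, w q * distToSet D q C :=
    hπcost.trans <| mul_le_mul_of_nonneg_left (OPTk_le_sum (fun x _ => hnonneg x) hw' hC hCk) hα
  have hgh : ∀ x y, distToSet D x C ≤ ρ * (D x y + distToSet D y C) :=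
    fun x y => distToSet_le_mul_add (fun c _ => htri x y c) hC
  exact weighted_sensitivity_bound_general (zero_le_one.trans hρ1) hnonneg
    (fun x => distToSet_nonneg fun c _ => hnonneg x c) hgh (fun x y => hsymm x y ▸ hgh y x)
    hw' hcost hπpos hp (cluster_weight_pos hw hp)
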